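/- Let T be a string of length n ≥ 2 over an alphabet Σ whose last character occurs exactly once in T, let S be a suffixient set for T, and let P[1..m] (m ≥ 1) be a pattern every character of which occurs in T. Then the MEM-finding algorithm run on P, T and S terminates, and the pairs (i′, j′) it reports are exactly the pairs such that P[i′..j′] is a MEM of P with respect to T, each MEM being reported exactly once; this holds for every choice of maximizer j ∈ S made at each iteration. -/

import Mathlib

/-- The 1-based (inclusive) substring `T[i..j]` of a string `T`. -/
def Substr {A : Type*} (T : List A) (i j : ℕ) : List A := (T.take j).drop (i - 1)

/-- A string `w` (possibly empty) is right-maximal in `T` if there are two distinct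
characters `c ≠ c'` such that both `w·c` and `w·c'` occur (as substrings) in `T`. -/
def RightMaximal {A : Type*} (T w : List A) : Prop :=
  ∃ c c' : A, c ≠ c' ∧ (w ++ [c]) <:+: T ∧ (w ++ [c']) <:+: T

/-- `S ⊆ {1,…,n}` is suffixient for `T` if for every right-maximal string `w` in `T`
and every character `c` such that `w·c` occurs in `T`, there is `s ∈ S` such that
`w·c` is a suffix of `T[1..s]`. -/
def IsSuffixient {A : Type*} (T : List A) (S : Finset ℕ) : Prop :=
  (∀ s ∈ S, 1 ≤ s ∧ s ≤ T.length) ∧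
  ∀ (w : List A) (c : A), RightMaximal T w → (w ++ [c]) <:+: T →
    ∃ s ∈ S, (w ++ [c]) <:+ T.take s

/-- `LCP(x, y)`: the length of the longest common prefix of `x` and `y`. -/
def lcp {A : Type*} [DecidableEq A] : List A → List A → ℕ
  | a :: x, b :: y => if a = b then lcp x y + 1 else 0
  | _, _ => 0

/-- `LCS(x, y)`: the length of the longest common suffix of `x` and `y`. -/
def lcs {A : Type*} [DecidableEq A] (x y : List A) : ℕ := lcp x.reverse y.reverse

/-- The length of the longest suffix of `x` that occurs (as a substring) in `T`. -/
def maxSufLen {A : Type*} [DecidableEq A] (x T : List A) : ℕ :=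
  Nat.findGreatest (fun k => x.drop (x.length - k) <:+: T) x.length

/-- The longest suffix of `x` that occurs (as a substring) in `T`. -/
def longestSufOcc {A : Type*} [DecidableEq A] (x T : List A) : List A :=
  x.drop (x.length - maxSufLen x T)

/-- `P[i..j]` (1-based, `1 ≤ i ≤ j ≤ m`) is a maximal exact match (MEM) of `P` with
respect to `T`: it occurs in `T`, it cannot be extended to the left
(`i = 1` or `P[i−1..j]` does not occur in `T`), and it cannot be extended to the right
(`j = m` or `P[i..j+1]` does not occur in `T`). -/
def IsMEM {A : Type*} (T P : List A) (i j : ℕ) : Prop :=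
  1 ≤ i ∧ i ≤ j ∧ j ≤ P.length ∧
  Substr P i j <:+: T ∧
  (i = 1 ∨ ¬ Substr P (i - 1) j <:+: T) ∧
  (j = P.length ∨ ¬ Substr P i (j + 1) <:+: T)

/-- A run of the MEM-finding algorithm starting at the top of the while-loop with
current position `i` and current length `ℓ`, where `ch i ℓ` is the element of `S`
chosen at the iteration with state `(i, ℓ)`.  It returns the list of reported pairs,
in order.  (Totality of this definition is exactly termination of the algorithm.) -/
def runAlg {A : Type*} [DecidableEq A] (T P : List A) (ch : ℕ → ℕ → ℕ) :
    ℕ → ℕ → List (ℕ × ℕ)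
  | i, ℓ =>
    if h : i ≤ P.length then
      let j := ch i ℓ
      let b := lcs (P.take i) (T.take j)
      let f := lcp (P.drop i) (T.drop j)
      (if b ≤ ℓ then [(i - ℓ, i - 1)] else []) ++ runAlg T P ch (i + f + 1) (b + f)
    else [(i - ℓ, i - 1)]
  termination_by i _ => P.length + 1 - i
  decreasing_by omega

theorem lcp_take {A : Type*} [DecidableEq A] (x y : List A) :
    x.take (lcp x y) = y.take (lcp x y) ∧ lcp x y ≤ x.length ∧ lcp x y ≤ y.length ∧
    (lcp x y < x.length → x[lcp x y]? ≠ y[lcp x y]?) := by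
  induction x generalizing y with
  | nil => simp [lcp]
  | cons a x ih =>
    cases y with
    | nil => simp [lcp]
    | cons b y =>
      by_cases h : a = b
      · obtain ⟨h1, h2, h3, h4⟩ := ih y
        subst h
        simp only [lcp, if_true, List.length_cons, List.take_succ_cons, List.getElem?_cons_succ]
        exact ⟨by rw [h1], by omega, by omega, fun hh => h4 (by omega)⟩
      · simp [lcp, h]

theorem le_lcp {A : Type*} [DecidableEq A] (w x y : List A) (hx : w <+: x) (hy : w <+: y) :
    w.length ≤ lcp x y := by
  induction w generalizing x y with
  | nil => simp
  | cons a w ih =>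
    obtain ⟨u, rfl⟩ := hx
    obtain ⟨v, rfl⟩ := hy
    have := ih (w ++ u) (w ++ v) ⟨u, rfl⟩ ⟨v, rfl⟩
    simp [lcp]; exact this

theorem le_lcs {A : Type*} [DecidableEq A] (w x y : List A) (hx : w <:+ x) (hy : w <:+ y) :
    w.length ≤ lcs x y := by
  have := le_lcp w.reverse x.reverse y.reverse (List.reverse_prefix.2 hx) (List.reverse_prefix.2 hy)
  simpa [lcs] using this

theorem lcs_suffix {A : Type*} [DecidableEq A] (x y : List A) :
    x.drop (x.length - lcs x y) <:+ y ∧ lcs x y ≤ x.length := by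
  obtain ⟨h1, h2, h3, -⟩ := lcp_take x.reverse y.reverse
  rw [List.length_reverse] at h2
  refine ⟨?_, h2⟩
  rw [List.take_reverse, List.take_reverse, List.reverse_inj] at h1
  unfold lcs
  rw [h1]
  exact List.drop_suffix _ _

theorem occ_mono {A : Type*} (T P : List A) {a b a' b' : ℕ} (ha : a ≤ a') (hb : b' ≤ b)
    (h : (P.take b).drop a <:+: T) : (P.take b').drop a' <:+: T := by
  have h1 : (P.take b).drop a' <:+ (P.take b).drop a := by
    obtain ⟨k, rfl⟩ := Nat.exists_eq_add_of_le ha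
    rw [← List.drop_drop]; exact List.drop_suffix _ _
  have h2 : (P.take b').drop a' <+: (P.take b).drop a' := by
    have : P.take b' <+: P.take b := List.take_prefix_take_left hb
    exact List.IsPrefix.drop this a'
  exact h2.isInfix.trans (h1.isInfix.trans h)

theorem rm_nil {A : Type*} [DecidableEq A] (T : List A)
    (hne : T ≠ []) (hn : 2 ≤ T.length)
    (hlast : T.count (T.getLast hne) = 1) : RightMaximal T [] := by
  cases T with
  | nil => simp at hn
  | cons a t =>
    have ht : t ≠ [] := by rintro rfl; simp at hn
    have hmem : t.getLast ht ∈ t := List.getLast_mem ht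
    rw [List.getLast_cons ht] at hlast
    refine ⟨a, t.getLast ht, ?_, ?_, ?_⟩
    · intro h
      rw [List.count_cons, ← h] at hlast
      have := List.count_pos_iff.2 hmem
      rw [← h] at this
      simp only [BEq.rfl, if_true] at hlast
      omega
    · simp
      exact ⟨[], t, by simp⟩
    · simpa using (List.singleton_infix_iff _ _).2 (List.mem_cons_of_mem a hmem)

theorem suffix_no_ext {A : Type*} [DecidableEq A] (T : List A)
    (hne : T ≠ []) (hlast : T.count (T.getLast hne) = 1) (g : List A) (c : A)
    (hg : g <:+ T) (hgc : g ++ [c] <:+: T) : g = [] := by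
  by_contra hg0
  obtain ⟨u, hu⟩ := hg
  obtain ⟨x, z, hx⟩ := hgc
  have hl : T.getLast hne = g.getLast hg0 := by
    simp only [← hu]; exact List.getLast_append_of_ne_nil _ hg0
  have hl2 : T.getLast hne = ([c] ++ z).getLast (by simp) := by
    have : T = (x ++ g) ++ ([c] ++ z) := by rw [← hx]; simp
    simp only [this]; exact List.getLast_append_of_ne_nil _ (by simp)
  have h1 : 0 < g.count (T.getLast hne) := List.count_pos_iff.2 (hl ▸ List.getLast_mem hg0)
  have h2 : 0 < ([c] ++ z).count (T.getLast hne) :=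
    List.count_pos_iff.2 (hl2 ▸ List.getLast_mem (by simp))
  have h3 : T.count (T.getLast hne) =
      x.count (T.getLast hne) + g.count (T.getLast hne) + ([c] ++ z).count (T.getLast hne) := by
    generalize T.getLast hne = l
    rw [← hx]
    simp only [List.count_append]; omega
  omega

/-- Loop invariant at state `(q+1, ℓ)`. -/
structure LoopInv {A : Type*} (T P : List A) (q ℓ : ℕ) : Prop where
  hq : q ≤ P.length
  hl : ℓ ≤ q
  pos : q = 0 ∨ 1 ≤ ℓ
  occ : ∃ e ≤ T.length, (P.take q).drop (q - ℓ) <:+ T.take e ∧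
    (q < P.length → P[q]? ≠ T[e]?)
  long : ∀ k, ℓ < k → k ≤ q → ¬ (P.take q).drop (q - k) <:+: T

theorem step_long {A : Type*} [DecidableEq A] (T : List A)
    (hne : T ≠ []) (hn : 2 ≤ T.length)
    (hlast : T.count (T.getLast hne) = 1)
    (S : Finset ℕ) (hS : IsSuffixient T S) (P : List A) (q ℓ b : ℕ) (hI : LoopInv T P q ℓ)
    (hq : q < P.length) (hb : ∀ s ∈ S, lcs (P.take (q+1)) (T.take s) ≤ b) (k : ℕ)
    (hk : b < k) (hkq : k ≤ q + 1) : ¬ (P.take (q+1)).drop (q + 1 - k) <:+: T := by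
  intro h
  obtain ⟨e, he, hsuf, hmis⟩ := hI.occ
  have hkl : k ≤ ℓ + 1 := by
    by_contra hc
    refine hI.long (k-1) (by omega) (by omega) ?_
    exact occ_mono T P (by omega) (by omega) h
  set g := (P.take q).drop (q + 1 - k) with hg
  have hgc : (P.take (q+1)).drop (q + 1 - k) = g ++ [P[q]] := by
    rw [← List.take_concat_get' P q hq, List.drop_append_of_le_length (by simp; omega)]
  have hglen : (g ++ [P[q]]).length = k := by
    rw [← hgc]; simp; omega
  have hgsuf : g <:+ T.take e := by
    refine List.IsSuffix.trans ?_ hsuf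
    rw [hg, show q + 1 - k = (q - ℓ) + (ℓ + 1 - k) by have := hI.hl; omega, ← List.drop_drop]
    exact List.drop_suffix _ _
  have hrm : RightMaximal T g := by
    by_cases hen : e < T.length
    · refine ⟨P[q], T[e], ?_, hgc ▸ h, ?_⟩
      · intro hh
        apply hmis hq
        rw [List.getElem?_eq_getElem hq, List.getElem?_eq_getElem hen, hh]
      · have : g ++ [T[e]] <:+ T.take (e+1) := by
          rw [← List.take_concat_get' T e hen]
          obtain ⟨u, hu⟩ := hgsuf
          exact ⟨u, by rw [← hu]; simp⟩
        exact this.isInfix.trans (List.take_prefix _ _).isInfix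
    · have : g = [] := by
        apply suffix_no_ext T hne hlast g P[q]
        · rwa [List.take_of_length_le (by omega)] at hgsuf
        · exact hgc ▸ h
      rw [this]; exact rm_nil T hne hn hlast
  obtain ⟨s, hs, hss⟩ := hS.2 g P[q] hrm (hgc ▸ h)
  have h1 := le_lcs _ _ _ (hgc ▸ List.drop_suffix (q+1-k) (P.take (q+1))) hss
  have h2 := hb s hs
  omega

theorem mem_end {A : Type*} (T P : List A) (q ℓ : ℕ) (hI : LoopInv T P q ℓ) (i' : ℕ) :
    IsMEM T P i' q ↔ 1 ≤ ℓ ∧ i' = q + 1 - ℓ ∧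
      (q = P.length ∨ ¬ (P.take (q+1)).drop (q - ℓ) <:+: T) := by
  obtain ⟨e, he, hsuf, -⟩ := hI.occ
  have hocc : (P.take q).drop (q - ℓ) <:+: T := hsuf.isInfix.trans (List.take_prefix _ _).isInfix
  have hl := hI.hl
  have hq := hI.hq
  unfold IsMEM Substr
  constructor
  · rintro ⟨h1, h2, h3, h4, h5, h6⟩
    have hp : 1 ≤ ℓ := by have := hI.pos; omega
    have ha : q - ℓ ≤ i' - 1 := by
      by_contra hc
      refine hI.long (q - (i' - 1)) (by omega) (by omega) ?_
      rwa [show q - (q - (i' - 1)) = i' - 1 by omega]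
    have hb : i' - 1 ≤ q - ℓ := by
      by_contra hc
      rcases h5 with h5 | h5
      · omega
      · exact h5 (occ_mono T P (by omega) le_rfl hocc)
    have hi : i' - 1 = q - ℓ := by omega
    rw [hi] at h6
    exact ⟨hp, by omega, h6⟩
  · rintro ⟨h1, rfl, h3⟩
    have hi : q + 1 - ℓ - 1 = q - ℓ := by omega
    rw [hi]
    refine ⟨by omega, by omega, hq, hocc, ?_, h3⟩
    by_cases hlq : ℓ = q
    · left; omega
    · right
      have := hI.long (ℓ + 1) (by omega) (by omega)
      rwa [show q - (ℓ + 1) = q - ℓ - 1 by omega] at this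

theorem run_correct {A : Type*} [DecidableEq A] (T : List A)
    (hne : T ≠ []) (hn : 2 ≤ T.length)
    (hlast : T.count (T.getLast hne) = 1)
    (S : Finset ℕ) (hS : IsSuffixient T S)
    (P : List A) (hm : 1 ≤ P.length) (hP : ∀ c ∈ P, [c] <:+: T)
    (ch : ℕ → ℕ → ℕ)
    (hch : ∀ i ℓ, 1 ≤ i → i ≤ P.length →
      ch i ℓ ∈ S ∧
      ∀ s ∈ S, lcs (P.take i) (T.take s) ≤ lcs (P.take i) (T.take (ch i ℓ)))
    (N q ℓ : ℕ) (hN : P.length - q ≤ N) (hI : LoopInv T P q ℓ) :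
    (runAlg T P ch (q+1) ℓ).Nodup ∧
    ∀ i' j' : ℕ, (i', j') ∈ runAlg T P ch (q+1) ℓ ↔ IsMEM T P i' j' ∧ q ≤ j' := by
  induction N generalizing q ℓ with
  | zero =>
    have hq := hI.hq
    have hqe : q = P.length := by omega
    rw [runAlg, dif_neg (by omega)]
    refine ⟨by simp, fun i' j' => ?_⟩
    have hp : 1 ≤ ℓ := by have := hI.pos; omega
    rw [List.mem_singleton, Prod.mk.injEq]
    constructor
    · rintro ⟨rfl, h2⟩
      rw [Nat.add_sub_cancel] at h2
      rw [h2]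
      exact ⟨(mem_end T P q ℓ hI _).2 ⟨hp, rfl, Or.inl hqe⟩, by omega⟩
    · rintro ⟨h, hj⟩
      have : j' = q := by have := h.2.2.1; omega
      subst this
      exact ⟨((mem_end T P j' ℓ hI _).1 h).2.1, by omega⟩
  | succ N ih =>
    by_cases hq : q < P.length
    swap
    · exact ih q ℓ (by omega) hI
    rw [runAlg, dif_pos (by omega)]
    obtain ⟨hjS, hjmax⟩ := hch (q+1) ℓ (by omega) (by omega)
    have hjn := (hS.1 _ hjS).2
    simp only
    generalize ch (q+1) ℓ = j at *
    have hlong := step_long T hne hn hlast S hS P q ℓ _ hI hq hjmax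
    obtain ⟨hbsuf, hbq⟩ := lcs_suffix (P.take (q+1)) (T.take j)
    obtain ⟨hf1, hf2, hf3, hf4⟩ := lcp_take (P.drop (q+1)) (T.drop j)
    have hlen : (P.take (q+1)).length = q + 1 := by simp; omega
    rw [hlen] at hbsuf hbq
    generalize lcs (P.take (q+1)) (T.take j) = b at *
    generalize lcp (P.drop (q+1)) (T.drop j) = f at *
    rw [List.length_drop] at hf2 hf3 hf4
    rw [List.getElem?_drop, List.getElem?_drop] at hf4
    have hb1 : 1 ≤ b := by
      by_contra hc
      apply hlong 1 (by omega) (by omega)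
      rw [← List.take_concat_get' P q hq, List.drop_append_of_le_length (by simp; omega),
        List.drop_of_length_le (by simp)]
      exact hP _ (List.getElem_mem hq)
    have hsuf' : (P.take (q+1+f)).drop (q+1-b) <:+ T.take (j+f) := by
      rw [List.take_add (i := q+1) (j := f), List.take_add (i := j) (j := f), List.drop_append_of_le_length (by omega), hf1]
      obtain ⟨u, hu⟩ := hbsuf
      exact ⟨u, by rw [← hu]; simp⟩
    have hocc' : (P.take (q+1+f)).drop (q+1-b) <:+: T :=
      hsuf'.isInfix.trans (List.take_prefix _ _).isInfix
    have hI' : LoopInv T P (q+1+f) (b+f) := by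
      refine ⟨by omega, by omega, by omega, ⟨j+f, by omega, ?_, fun h => hf4 (by omega)⟩, ?_⟩
      · rwa [show q+1+f-(b+f) = q+1-b by omega]
      · intro k hk hkq h
        apply hlong (k-f) (by omega) (by omega)
        exact occ_mono T P (by omega) (by omega) h
    obtain ⟨ihn, ihm⟩ := ih (q+1+f) (b+f) (by omega) hI'
    have hiff : b ≤ ℓ ↔ ¬ (P.take (q+1)).drop (q - ℓ) <:+: T := by
      constructor
      · intro hbl h
        have := hI.hl
        exact hlong (ℓ+1) (by omega) (by omega) (by rwa [show q+1-(ℓ+1) = q-ℓ by omega])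
      · intro h
        by_contra hc
        exact h (occ_mono T P (by omega) (by omega) hocc')
    have hmid : ∀ i' j', IsMEM T P i' j' → q < j' → q+1+f ≤ j' := by
      rintro i' j' ⟨h1, h2, h3, h4, h5, h6⟩ hj
      by_contra hc
      unfold Substr at h4 h6
      have ha : q+1-b ≤ i'-1 := by
        by_contra hc
        apply hlong (q+1-(i'-1)) (by omega) (by omega)
        exact occ_mono T P (by omega) (by omega) h4
      rcases h6 with h6 | h6
      · omega
      · exact h6 (occ_mono T P ha (by omega) hocc')
    have hend := mem_end T P q ℓ hI
    rw [← hiff] at hend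
    by_cases hbl : b ≤ ℓ
    · rw [if_pos hbl]
      refine ⟨?_, ?_⟩
      · rw [List.singleton_append, List.nodup_cons]
        refine ⟨fun h => ?_, ihn⟩
        have := ((ihm _ _).1 h).2
        omega
      · intro i' j'
        rw [List.singleton_append, List.mem_cons, Prod.mk.injEq]
        refine Iff.trans (or_congr Iff.rfl (ihm i' j')) ?_
        constructor
        · rintro (⟨rfl, rfl⟩ | ⟨h, hj⟩)
          · exact ⟨(hend _).2 ⟨by omega, rfl, Or.inr hbl⟩, by omega⟩
          · exact ⟨h, by omega⟩
        · rintro ⟨h, hj⟩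
          rcases hj.eq_or_lt with rfl | hj
          · exact Or.inl ⟨((hend _).1 h).2.1, by omega⟩
          · exact Or.inr ⟨h, hmid _ _ h hj⟩
    · rw [if_neg hbl, List.nil_append]
      refine ⟨ihn, fun i' j' => (ihm i' j').trans ?_⟩
      constructor
      · rintro ⟨h, hj⟩
        exact ⟨h, by omega⟩
      · rintro ⟨h, hj⟩
        rcases hj.eq_or_lt with rfl | hj
        · have := ((hend _).1 h).2.2
          omega
        · exact ⟨h, hmid _ _ h hj⟩

/-- The MEM-finding algorithm, run on `P`, `T` and a suffixient set `S` with any choice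
function `ch` that at each iteration picks a maximizer `j ∈ S` of
`LCS(P[1..i], T[1..s])` over `s ∈ S`, terminates (it is a total function) and the
pairs `(i', j')` it reports are exactly the pairs such that `P[i'..j']` is a MEM of
`P` with respect to `T`, each MEM being reported exactly once. -/
theorem mem_finding_correct {A : Type*} [DecidableEq A] (T : List A)
    (hne : T ≠ []) (hn : 2 ≤ T.length)
    (hlast : T.count (T.getLast hne) = 1)
    (S : Finset ℕ) (hS : IsSuffixient T S)
    (P : List A) (hm : 1 ≤ P.length) (hP : ∀ c ∈ P, [c] <:+: T)
    (ch : ℕ → ℕ → ℕ)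
    (hch : ∀ i ℓ, 1 ≤ i → i ≤ P.length →
      ch i ℓ ∈ S ∧
      ∀ s ∈ S, lcs (P.take i) (T.take s) ≤ lcs (P.take i) (T.take (ch i ℓ))) :
    (runAlg T P ch 1 0).Nodup ∧
    ∀ i' j' : ℕ, (i', j') ∈ runAlg T P ch 1 0 ↔ IsMEM T P i' j' := by
  have hI : LoopInv T P 0 0 := by
    refine ⟨by omega, le_rfl, Or.inl rfl, ⟨T.length, le_rfl, by simp, ?_⟩, by omega⟩
    intro h
    simp [h]
  obtain ⟨h1, h2⟩ := run_correct T hne hn hlast S hS P hm hP ch hch P.length 0 0 (by omega) hI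
  exact ⟨h1, fun i' j' => (h2 i' j').trans (and_iff_left (Nat.zero_le _))⟩
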